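/- arXiv:2503.02663 — 2 statements merged into one kernel-verified Lean document; each statement's English description precedes it below -/
import Mathlib

section
/- For all natural numbers n and ℓ, K(n,ℓ) equals the number of flip-equivalence classes of planar binary trees with exactly n nodes whose class cardinality is 2^ℓ (equivalently, whose members have exactly ℓ internal positions with non-flip-equivalent children subtrees); in particular K(n,ℓ) is a natural number. -/
/-- Planar binary trees. -/
inductive T : Type where
  | nil : T
  | node : T → T → T

/-- The number of nodes of a planar binary tree. -/
def T.nodes : T → ℕ
  | .nil => 0
  | .node a b => a.nodes + b.nodes + 1

/-- Flip equivalence: the least relation such that `nil ≈ nil` and, whenever `a ≈ c` and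
`b ≈ d`, both `node a b ≈ node c d` and `node a b ≈ node d c`. -/
inductive Flip : T → T → Prop where
  | nil : Flip .nil .nil
  | node {a b c d : T} : Flip a c → Flip b d → Flip (.node a b) (.node c d)
  | swap {a b c d : T} : Flip a c → Flip b d → Flip (.node a b) (.node d c)

open Classical in
/-- The number of internal positions of a tree whose two children subtrees are not
flip-equivalent. -/
noncomputable def ell : T → ℕ
  | .nil => 0
  | .node a b => ell a + ell b + (if Flip a b then 0 else 1)

open Classical in
/-- The array `K n ℓ`: base cases (taking precedence) `K n 0 = 1` if `n = 2^r - 1` and `0`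
otherwise; `K s t = 0` for `t ≥ s > 0`; `K s (s-1) = 1` for `s > 1`; otherwise
`K (2n) ℓ = (1/2) · ∑_{k=0}^{2n-1} ∑_{v=0}^{ℓ-1} K k v · K (2n-1-k) (ℓ-1-v)`,
`K (2n+1) (2ℓ) = K n ℓ + (1/2) · ∑_{k=0}^{2n} ∑_{v=0}^{2ℓ-1} K k v · K (2n-k) (2ℓ-1-v)` and
`K (2n+1) (2ℓ+1) = (1/2) · (-K n ℓ + ∑_{k=0}^{2n} ∑_{v=0}^{2ℓ} K k v · K (2n-k) (2ℓ-v))`. -/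
noncomputable def K : ℕ → ℕ → ℚ
  | n, l =>
    if l = 0 then (if ∃ r : ℕ, n = 2 ^ r - 1 then 1 else 0)
    else if 0 < n ∧ n ≤ l then 0
    else if 1 < n ∧ l = n - 1 then 1
    else if h : n % 2 = 0 then
      (1 / 2) * ∑ k ∈ (Finset.range n).attach, ∑ v ∈ Finset.range l,
        K k.1 v * K (n - 1 - k.1) (l - 1 - v)
    else if l % 2 = 0 then
      K (n / 2) (l / 2) + (1 / 2) * ∑ k ∈ (Finset.range n).attach, ∑ v ∈ Finset.range l,
        K k.1 v * K (n - 1 - k.1) (l - 1 - v)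
    else
      (1 / 2) * (- K (n / 2) (l / 2) + ∑ k ∈ (Finset.range n).attach, ∑ v ∈ Finset.range l,
        K k.1 v * K (n - 1 - k.1) (l - 1 - v))
termination_by n l => n
decreasing_by
  · have := Finset.mem_range.mp k.2; omega
  · have := Finset.mem_range.mp k.2; omega
  · omega
  · have := Finset.mem_range.mp k.2; omega
  · have := Finset.mem_range.mp k.2; omega
  · omega
  · have := Finset.mem_range.mp k.2; omega
  · have := Finset.mem_range.mp k.2; omega

/-!
Let `F(x, y)` be the generating function of the flip classes, in which a class with `n` nodes and
statistic `ell = ℓ` contributes `x ^ n y ^ ℓ`. A class other than `nil` is an unordered pair of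
classes, and it gains an internal position counted by `ell` exactly when the two are distinct, so

  `F = 1 + x (F(x², y²) + y (F(x, y)² - F(x², y²)) / 2)`.

Away from its base cases, the recurrence defining `K` is this equation read off coefficientwise.
The base cases are the classes with `ell = 0`, which are the perfect trees, and the bound
`ell < nodes` for nonempty trees, which is sharp exactly for the combs.
-/

section Arrays

open Finset

variable {R : Type*}

/-- The coefficients of `f(x², y²)`, where `f n l` is the coefficient of `x ^ n y ^ l` in
`f(x, y)`. -/
def expandTwo [Zero R] (f : ℕ → ℕ → R) (n l : ℕ) : R :=
  if Even n ∧ Even l then f (n / 2) (l / 2) else 0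

/-- The coefficients of `f(x, y)²`, where `f n l` is the coefficient of `x ^ n y ^ l` in
`f(x, y)`. -/
def selfConv [NonUnitalNonAssocSemiring R] (f : ℕ → ℕ → R) (n l : ℕ) : R :=
  ∑ p ∈ antidiagonal n, ∑ q ∈ antidiagonal l, f p.1 q.1 * f p.2 q.2

theorem expandTwo_two_mul [Zero R] (f : ℕ → ℕ → R) (n l : ℕ) :
    expandTwo f (2 * n) (2 * l) = f n l := by
  simp [expandTwo]

theorem expandTwo_of_not_even [Zero R] {f : ℕ → ℕ → R} {n l : ℕ} (h : ¬(Even n ∧ Even l)) :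
    expandTwo f n l = 0 :=
  if_neg h

theorem expandTwo_congr [Zero R] {f g : ℕ → ℕ → R} {n : ℕ} (h : ∀ k ≤ n, f k = g k) :
    expandTwo f n = expandTwo g n := by
  funext l
  rw [expandTwo, expandTwo, h _ (Nat.div_le_self n 2)]

theorem selfConv_congr [NonUnitalNonAssocSemiring R] {f g : ℕ → ℕ → R} {n : ℕ}
    (h : ∀ k ≤ n, f k = g k) : selfConv f n = selfConv g n := by
  funext l
  refine sum_congr rfl fun p hp => ?_
  rw [h _ (HasAntidiagonal.antidiagonal.fst_le hp), h _ (HasAntidiagonal.antidiagonal.snd_le hp)]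

theorem selfConv_eq_sum_range [NonUnitalNonAssocSemiring R] (f : ℕ → ℕ → R) (n l : ℕ) :
    selfConv f n l =
      ∑ k ∈ range (n + 1), ∑ v ∈ range (l + 1), f k v * f (n - k) (l - v) := by
  simp only [selfConv, Nat.sum_antidiagonal_eq_sum_range_succ_mk]

end Arrays

section Recurrence

open Classical in
theorem K_zero_right (n : ℕ) : K n 0 = if ∃ r : ℕ, n = 2 ^ r - 1 then 1 else 0 := by
  rw [K, if_pos rfl]

theorem K_eq_zero_of_le {n l : ℕ} (hl : l ≠ 0) (h : n ≤ l) : K n l = 0 := by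
  rw [K, if_neg hl]
  rcases n.eq_zero_or_pos with rfl | hn
  · simp
  · rw [if_pos ⟨hn, h⟩]

theorem K_succ_self (n : ℕ) : K (n + 1) n = 1 := by
  rcases n.eq_zero_or_pos with rfl | hn
  · rw [K_zero_right, if_pos ⟨1, rfl⟩]
  · rw [K, if_neg (by lia), if_neg (by lia), if_pos (by lia)]

theorem K_succ_succ {n l : ℕ} (h : l + 1 < n) :
    K (n + 1) (l + 1) =
      expandTwo K n (l + 1) + 1 / 2 * (selfConv K n l - expandTwo K n l) := by
  have hsum : ∑ k ∈ (Finset.range (n + 1)).attach, ∑ v ∈ Finset.range (l + 1),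
      K k.1 v * K (n + 1 - 1 - k.1) (l + 1 - 1 - v) = selfConv K n l := by
    rw [selfConv_eq_sum_range]
    exact Finset.sum_attach (Finset.range (n + 1))
      fun k => ∑ v ∈ Finset.range (l + 1), K k v * K (n - k) (l - v)
  rw [K, if_neg (by lia), if_neg (by lia), if_neg (by lia), hsum]
  rcases n.even_or_odd' with ⟨m, rfl | rfl⟩
  · have hm : (2 * m + 1) / 2 = m := by lia
    rw [dif_neg (by lia), hm]
    rcases l.even_or_odd' with ⟨v, rfl | rfl⟩
    · have hv : (2 * v + 1) / 2 = v := by lia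
      rw [if_neg (by lia), hv, expandTwo_two_mul, expandTwo_of_not_even (by grind)]
      ring
    · have hv : 2 * v + 1 + 1 = 2 * (v + 1) := by ring
      rw [if_pos (by lia), hv, Nat.mul_div_cancel_left _ two_pos, expandTwo_two_mul,
        expandTwo_of_not_even (by grind)]
      ring
  · rw [dif_pos (by lia), expandTwo_of_not_even (by grind), expandTwo_of_not_even (by grind)]
    ring

end Recurrence

section UnorderedPairs

open Finset

theorem two_mul_card_image_of_eq_iff_eq_or_eq_swap {α β : Type*} [DecidableEq β]
    {s : Finset (α × α)} {f : α × α → β}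
    (hf : ∀ p ∈ s, ∀ q ∈ s, f p = f q ↔ p = q ∨ p = q.swap)
    (hswap : ∀ p ∈ s, p.swap ∈ s) (hne : ∀ p ∈ s, p.1 ≠ p.2) :
    2 * #(s.image f) = #s := by
  classical
  have hfiber : ∀ b ∈ s.image f, #{q ∈ s | f q = b} = 2 := by
    intro b hb
    obtain ⟨p, hp, rfl⟩ := mem_image.mp hb
    have hpair : {q ∈ s | f q = f p} = {p, p.swap} := by
      ext q
      rw [mem_filter, mem_insert, mem_singleton]
      constructor
      · rintro ⟨hq, hqp⟩
        exact (hf q hq p hp).mp hqp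
      · intro hqp
        have hq : q ∈ s := by
          rcases hqp with rfl | rfl
          exacts [hp, hswap p hp]
        exact ⟨hq, (hf q hq p hp).mpr hqp⟩
    rw [hpair, card_pair fun h => hne p hp (congrArg Prod.fst h)]
  rw [card_eq_sum_card_image f s, sum_const_nat hfiber, mul_comm]

end UnorderedPairs

namespace Flip

variable {a b c d s t u : T}

@[refl]
theorem refl : ∀ t : T, Flip t t
  | .nil => .nil
  | .node a b => .node (refl a) (refl b)

@[symm]
theorem symm (h : Flip s t) : Flip t s := by
  induction h with
  | nil => exact .nil
  | node _ _ hac hbd => exact .node hac hbd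
  | swap _ _ hac hbd => exact .swap hbd hac

@[trans]
theorem trans (h : Flip s t) (h' : Flip t u) : Flip s u := by
  induction h generalizing u with
  | nil => exact h'
  | node _ _ hac hbd =>
    cases h' with
    | node hc hd => exact .node (hac hc) (hbd hd)
    | swap hc hd => exact .swap (hac hc) (hbd hd)
  | swap _ _ hac hbd =>
    cases h' with
    | node hd hc => exact .swap (hac hc) (hbd hd)
    | swap hd hc => exact .node (hac hc) (hbd hd)

/-- Flip equivalence as a setoid on planar binary trees. -/
instance setoid : Setoid T := ⟨Flip, refl, symm, trans⟩

theorem congr (hac : Flip a c) (hbd : Flip b d) : Flip a b ↔ Flip c d :=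
  ⟨fun h => (hac.symm.trans h).trans hbd, fun h => (hac.trans h).trans hbd.symm⟩

theorem comm : Flip s t ↔ Flip t s :=
  ⟨symm, symm⟩

theorem nodes_eq (h : Flip s t) : s.nodes = t.nodes := by
  induction h with
  | nil => rfl
  | node _ _ hac hbd => rw [T.nodes, T.nodes, hac, hbd]
  | swap _ _ hac hbd => rw [T.nodes, T.nodes, hac, hbd, Nat.add_comm (T.nodes _)]

theorem ell_eq (h : Flip s t) : ell s = ell t := by
  classical
  induction h with
  | nil => rfl
  | node hac hbd iac ibd =>
    simp only [ell, iac, ibd, hac.congr hbd]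
  | @swap _ _ c _ hac hbd iac ibd =>
    simp only [ell, iac, ibd, (hac.congr hbd).trans comm, Nat.add_comm (ell c)]

end Flip

theorem T.finite_setOf_nodes_le (n : ℕ) : {t : T | t.nodes ≤ n}.Finite := by
  induction n with
  | zero =>
    refine (Set.finite_singleton T.nil).subset ?_
    rintro (_ | ⟨a, b⟩) ht
    · rfl
    · simp [T.nodes] at ht
  | succ n ih =>
    refine ((ih.image2 T.node ih).insert T.nil).subset ?_
    rintro (_ | ⟨a, b⟩) ht
    · exact .inl rfl
    · have hab : a.nodes + b.nodes + 1 ≤ n + 1 := ht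
      exact .inr ⟨a, show a.nodes ≤ n by lia, b, show b.nodes ≤ n by lia, rfl⟩

/-- Flip-equivalence classes of planar binary trees, as a quotient type. -/
def FlipClass : Type := Quotient Flip.setoid

namespace FlipClass

open Finset

noncomputable instance : DecidableEq FlipClass := Classical.decEq _

/-- The class of a tree. -/
def mk (t : T) : FlipClass := Quotient.mk _ t

/-- The number of nodes of the members of a class. -/
def nodes : FlipClass → ℕ := Quotient.lift T.nodes fun _ _ => Flip.nodes_eq

/-- The number of internal positions with distinct children classes, for the members of a class. -/
noncomputable def ell : FlipClass → ℕ := Quotient.lift _root_.ell fun _ _ => Flip.ell_eq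

/-- The class of the empty tree. -/
def nil : FlipClass := mk .nil

/-- The class of the trees with given children classes, in either order. -/
def node : FlipClass → FlipClass → FlipClass :=
  Quotient.map₂ T.node fun _ _ hac _ _ hbd => .node hac hbd

variable {n l : ℕ} {A B C D : FlipClass}

theorem mk_eq_mk {s t : T} : mk s = mk t ↔ Flip s t :=
  Quotient.eq

theorem mk_surjective : Function.Surjective mk :=
  Quotient.mk_surjective

@[elab_as_elim, induction_eliminator]
theorem induction {motive : FlipClass → Prop} (nil : motive nil)
    (node : ∀ A B, motive A → motive B → motive (node A B)) (A : FlipClass) : motive A := by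
  obtain ⟨t, rfl⟩ := mk_surjective A
  induction t with
  | nil => exact nil
  | node a b iha ihb => exact node _ _ iha ihb

@[simp]
theorem nodes_nil : nil.nodes = 0 := rfl

@[simp]
theorem ell_nil : nil.ell = 0 := by
  change _root_.ell .nil = 0
  rw [_root_.ell]

@[simp]
theorem nodes_node (A B : FlipClass) : (node A B).nodes = A.nodes + B.nodes + 1 := by
  obtain ⟨a, rfl⟩ := mk_surjective A
  obtain ⟨b, rfl⟩ := mk_surjective B
  rfl

theorem ell_node (A B : FlipClass) :
    (node A B).ell = A.ell + B.ell + if A = B then 0 else 1 := by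
  classical
  obtain ⟨a, rfl⟩ := mk_surjective A
  obtain ⟨b, rfl⟩ := mk_surjective B
  change _root_.ell (.node a b) = _root_.ell a + _root_.ell b + _
  simp only [_root_.ell, mk_eq_mk]

@[simp]
theorem ell_node_self (A : FlipClass) : (node A A).ell = A.ell + A.ell := by
  simp [ell_node]

theorem ell_node_of_ne (h : A ≠ B) : (node A B).ell = A.ell + B.ell + 1 := by
  simp [ell_node, h]

theorem node_eq_node_iff : node A B = node C D ↔ A = C ∧ B = D ∨ A = D ∧ B = C := by
  obtain ⟨a, rfl⟩ := mk_surjective A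
  obtain ⟨b, rfl⟩ := mk_surjective B
  obtain ⟨c, rfl⟩ := mk_surjective C
  obtain ⟨d, rfl⟩ := mk_surjective D
  change mk (.node a b) = mk (.node c d) ↔ _
  simp only [mk_eq_mk]
  constructor
  · rintro (_ | ⟨hac, hbd⟩ | ⟨had, hbc⟩)
    exacts [.inl ⟨hac, hbd⟩, .inr ⟨had, hbc⟩]
  · rintro (⟨hac, hbd⟩ | ⟨had, hbc⟩)
    exacts [.node hac hbd, .swap had hbc]

theorem node_comm (A B : FlipClass) : node A B = node B A :=
  node_eq_node_iff.mpr (.inr ⟨rfl, rfl⟩)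

/-! ### Perfect trees and combs -/

/-- The class of the perfect tree of height `r`. -/
def perfect : ℕ → FlipClass
  | 0 => nil
  | r + 1 => node (perfect r) (perfect r)

theorem nodes_perfect_add_one (r : ℕ) : (perfect r).nodes + 1 = 2 ^ r := by
  induction r with
  | zero => rfl
  | succ r ih => rw [perfect, nodes_node, pow_succ]; lia

theorem ell_perfect (r : ℕ) : (perfect r).ell = 0 := by
  induction r with
  | zero => exact ell_nil
  | succ r ih => rw [perfect, ell_node_self, ih]

theorem exists_eq_perfect (h : A.ell = 0) : ∃ r, A = perfect r := by
  induction A with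
  | nil => exact ⟨0, rfl⟩
  | node A B ihA _ =>
    obtain rfl : A = B := by
      by_contra hne
      simp [ell_node_of_ne hne] at h
    obtain ⟨r, rfl⟩ := ihA (by simpa using h)
    exact ⟨r + 1, rfl⟩

/-- The class of the tree with `n` nodes each of which has an empty child. -/
def comb : ℕ → FlipClass
  | 0 => nil
  | n + 1 => node nil (comb n)

theorem nodes_comb (n : ℕ) : (comb n).nodes = n := by
  induction n with
  | zero => rfl
  | succ n ih => rw [comb, nodes_node, nodes_nil, ih, zero_add]

theorem ell_comb_succ (n : ℕ) : (comb (n + 1)).ell = n := by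
  induction n with
  | zero => simp [comb]
  | succ n ih =>
    have hne : nil ≠ comb (n + 1) := by
      intro h
      simpa [nodes_comb] using congrArg nodes h
    rw [comb, ell_node_of_ne hne, ih, ell_nil, zero_add]

theorem eq_nil_or_ell_lt_nodes (A : FlipClass) : A = nil ∨ A.ell < A.nodes := by
  induction A with
  | nil => exact .inl rfl
  | node A B ihA ihB =>
    right
    by_cases hAB : A = B
    · subst hAB
      rw [ell_node_self, nodes_node]
      rcases ihA with rfl | hA
      · simp
      · lia
    · rw [ell_node_of_ne hAB, nodes_node]
      rcases ihA with rfl | hA <;> rcases ihB with rfl | hB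
      · exact absurd rfl hAB
      all_goals grind [nodes_nil, ell_nil]

theorem eq_comb_of_nodes_le (h : A.nodes ≤ A.ell + 1) : A = comb A.nodes := by
  induction A with
  | nil => rfl
  | node A B ihA ihB =>
    have hle : (node A B).ell ≤ A.ell + B.ell + 1 := by
      rw [ell_node]; split_ifs <;> lia
    rw [nodes_node] at h ⊢
    rcases A.eq_nil_or_ell_lt_nodes with rfl | hA
    · rw [nodes_nil, zero_add, comb, ← ihB (by grind [nodes_nil, ell_nil])]
    · rcases B.eq_nil_or_ell_lt_nodes with rfl | hB
      · rw [nodes_nil, add_zero, comb, ← ihA (by grind [nodes_nil, ell_nil]), node_comm]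
      · lia

/-! ### Counting classes -/

theorem finite_setOf_nodes_ell (n l : ℕ) : {A : FlipClass | A.nodes = n ∧ A.ell = l}.Finite := by
  refine ((T.finite_setOf_nodes_le n).image mk).subset fun A hA => ?_
  obtain ⟨a, rfl⟩ := mk_surjective A
  exact ⟨a, hA.1.le, rfl⟩

/-- The classes with `n` nodes and statistic `ell` equal to `l`. -/
noncomputable def withStats (n l : ℕ) : Finset FlipClass :=
  (finite_setOf_nodes_ell n l).toFinset

@[simp]
theorem mem_withStats : A ∈ withStats n l ↔ A.nodes = n ∧ A.ell = l := by
  simp [withStats]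

/-- The number of classes with `n` nodes and statistic `ell` equal to `l`, as a rational number
to be compared with `K n l`. -/
noncomputable def count (n l : ℕ) : ℚ := #(withStats n l)

open Classical in
theorem count_zero_right (n : ℕ) : count n 0 = if ∃ r : ℕ, n = 2 ^ r - 1 then 1 else 0 := by
  split_ifs with h
  · obtain ⟨r, rfl⟩ := h
    have hr := nodes_perfect_add_one r
    have hsingle : withStats (2 ^ r - 1) 0 = {perfect r} := by
      ext A
      rw [mem_withStats, mem_singleton]
      constructor
      · rintro ⟨hnodes, hell⟩
        obtain ⟨s, rfl⟩ := exists_eq_perfect hell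
        have hs := nodes_perfect_add_one s
        rw [Nat.pow_right_injective le_rfl (show 2 ^ s = 2 ^ r by lia)]
      · rintro rfl
        exact ⟨by lia, ell_perfect r⟩
    simp [count, hsingle]
  · have hempty : withStats n 0 = ∅ := by
      refine eq_empty_of_forall_notMem fun A hA => h ?_
      obtain ⟨rfl, hell⟩ := mem_withStats.mp hA
      obtain ⟨r, rfl⟩ := exists_eq_perfect hell
      exact ⟨r, Nat.eq_sub_of_add_eq (nodes_perfect_add_one r)⟩
    simp [count, hempty]

theorem count_eq_zero_of_le (hl : l ≠ 0) (h : n ≤ l) : count n l = 0 := by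
  have hempty : withStats n l = ∅ := by
    refine eq_empty_of_forall_notMem fun A hA => ?_
    obtain ⟨rfl, rfl⟩ := mem_withStats.mp hA
    rcases A.eq_nil_or_ell_lt_nodes with rfl | hlt
    · exact hl ell_nil
    · lia
  simp [count, hempty]

theorem count_succ_self (n : ℕ) : count (n + 1) n = 1 := by
  have hsingle : withStats (n + 1) n = {comb (n + 1)} := by
    ext A
    rw [mem_withStats, mem_singleton]
    constructor
    · rintro ⟨hnodes, hell⟩
      rw [← hnodes]
      exact eq_comb_of_nodes_le (by lia)
    · rintro rfl
      exact ⟨nodes_comb _, ell_comb_succ n⟩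
  simp [count, hsingle]

/-! ### The functional equation -/

/-- The ordered pairs of classes with `n` nodes in total and statistics `ell` adding up to `l`. -/
noncomputable def pairs (n l : ℕ) : Finset (FlipClass × FlipClass) :=
  (antidiagonal n ×ˢ antidiagonal l).biUnion
    fun x => withStats x.1.1 x.2.1 ×ˢ withStats x.1.2 x.2.2

@[simp]
theorem mem_pairs {p : FlipClass × FlipClass} :
    p ∈ pairs n l ↔ p.1.nodes + p.2.nodes = n ∧ p.1.ell + p.2.ell = l := by
  simp only [pairs, mem_biUnion, mem_product, HasAntidiagonal.mem_antidiagonal, mem_withStats]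
  constructor
  · rintro ⟨x, hx⟩
    lia
  · intro h
    exact ⟨((p.1.nodes, p.2.nodes), (p.1.ell, p.2.ell)), h, ⟨rfl, rfl⟩, rfl, rfl⟩

theorem card_pairs (n l : ℕ) : (#(pairs n l) : ℚ) = selfConv count n l := by
  rw [pairs, card_biUnion, sum_product]
  · simp [selfConv, count]
  · rintro x - y - hxy
    refine disjoint_left.mpr fun p hx hy => hxy ?_
    simp only [mem_product, mem_withStats] at hx hy
    ext <;> lia

theorem card_diagonal_pairs (n l : ℕ) :
    (#{p ∈ pairs n l | p.1 = p.2} : ℚ) = expandTwo count n l := by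
  by_cases h : Even n ∧ Even l
  · obtain ⟨⟨m, rfl⟩, ⟨v, rfl⟩⟩ := h
    rw [← two_mul, ← two_mul]
    have himage : {p ∈ pairs (2 * m) (2 * v) | p.1 = p.2} =
        (withStats m v).image fun A => (A, A) := by
      ext ⟨A, B⟩
      simp only [mem_filter, mem_pairs, mem_image, mem_withStats, Prod.mk.injEq]
      constructor
      · rintro ⟨h, rfl⟩
        exact ⟨A, by lia, rfl, rfl⟩
      · rintro ⟨C, ⟨rfl, rfl⟩, rfl, rfl⟩
        lia
    rw [himage, card_image_of_injective _ fun A B h => congrArg Prod.fst h,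
      expandTwo_two_mul, count]
  · rw [expandTwo_of_not_even h, Nat.cast_eq_zero, card_eq_zero, filter_eq_empty_iff]
    rintro ⟨A, B⟩ hmem hAB
    obtain rfl : A = B := hAB
    obtain ⟨rfl, rfl⟩ := mem_pairs.mp hmem
    exact h ⟨⟨_, rfl⟩, ⟨_, rfl⟩⟩

theorem withStats_succ_succ (n l : ℕ) :
    withStats (n + 1) (l + 1) =
      {p ∈ pairs n (l + 1) | p.1 = p.2}.image node.uncurry ∪
        {p ∈ pairs n l | p.1 ≠ p.2}.image node.uncurry := by
  ext A
  simp only [mem_union, mem_image, mem_filter, mem_pairs, mem_withStats, Prod.exists,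
    Function.uncurry_apply_pair]
  constructor
  · rintro ⟨hnodes, hell⟩
    induction A with
    | nil => simp at hnodes
    | node B C =>
      rw [nodes_node] at hnodes
      by_cases hBC : B = C
      · subst hBC
        rw [ell_node_self] at hell
        exact .inl ⟨B, B, by lia, rfl⟩
      · rw [ell_node_of_ne hBC] at hell
        exact .inr ⟨B, C, by lia, rfl⟩
  · rintro (⟨B, C, ⟨⟨rfl, hell⟩, rfl⟩, rfl⟩ | ⟨B, C, ⟨⟨rfl, rfl⟩, hBC⟩, rfl⟩)
    · exact ⟨nodes_node B B, (ell_node_self B).trans hell⟩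
    · exact ⟨nodes_node B C, ell_node_of_ne hBC⟩

theorem uncurry_node_eq_iff (p q : FlipClass × FlipClass) :
    node.uncurry p = node.uncurry q ↔ p = q ∨ p = q.swap := by
  simp only [Function.uncurry_def, node_eq_node_iff, Prod.ext_iff, Prod.fst_swap, Prod.snd_swap]

theorem card_image_node_diagonal (n l : ℕ) :
    #({p ∈ pairs n l | p.1 = p.2}.image node.uncurry) = #{p ∈ pairs n l | p.1 = p.2} := by
  refine card_image_of_injOn fun p hp q hq h => ?_
  have hp' : p.1 = p.2 := (mem_filter.mp hp).2
  have hq' : q.1 = q.2 := (mem_filter.mp hq).2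
  rcases (uncurry_node_eq_iff p q).mp h with h | rfl
  · exact h
  · exact Prod.ext hq'.symm hq'

theorem two_mul_card_image_node_offDiagonal (n l : ℕ) :
    2 * #({p ∈ pairs n l | p.1 ≠ p.2}.image node.uncurry) = #{p ∈ pairs n l | p.1 ≠ p.2} := by
  refine two_mul_card_image_of_eq_iff_eq_or_eq_swap (fun p _ q _ => uncurry_node_eq_iff p q)
    (fun p hp => ?_) fun p hp => (mem_filter.mp hp).2
  simp only [mem_filter, mem_pairs, Prod.fst_swap, Prod.snd_swap] at hp ⊢
  exact ⟨by lia, hp.2.symm⟩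

theorem disjoint_image_node (n l l' : ℕ) :
    Disjoint ({p ∈ pairs n l | p.1 = p.2}.image node.uncurry)
      ({p ∈ pairs n l' | p.1 ≠ p.2}.image node.uncurry) := by
  simp only [disjoint_left, mem_image, mem_filter]
  rintro _ ⟨p, ⟨-, hp⟩, rfl⟩ ⟨q, ⟨-, hq⟩, h⟩
  rcases (uncurry_node_eq_iff q p).mp h with rfl | rfl
  exacts [hq hp, hq hp.symm]

theorem count_succ_succ (n l : ℕ) :
    count (n + 1) (l + 1) =
      expandTwo count n (l + 1) + 1 / 2 * (selfConv count n l - expandTwo count n l) := by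
  have hsplit : (#{p ∈ pairs n l | p.1 = p.2} + #{p ∈ pairs n l | p.1 ≠ p.2} : ℚ) =
      #(pairs n l) := mod_cast card_filter_add_card_filter_not _
  have hoff : (2 * #({p ∈ pairs n l | p.1 ≠ p.2}.image node.uncurry) : ℚ) =
      #{p ∈ pairs n l | p.1 ≠ p.2} := mod_cast two_mul_card_image_node_offDiagonal n l
  rw [count, withStats_succ_succ, card_union_of_disjoint (disjoint_image_node _ _ _),
    card_image_node_diagonal, Nat.cast_add, card_diagonal_pairs, ← card_pairs,
    ← card_diagonal_pairs n l]
  linarith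

theorem count_eq_K (n : ℕ) : count n = K n := by
  induction n using Nat.strong_induction_on with
  | _ n ih =>
  funext l
  rcases eq_or_ne l 0 with rfl | hl
  · rw [count_zero_right, K_zero_right]
  rcases le_or_gt n l with hle | hlt
  · rw [count_eq_zero_of_le hl hle, K_eq_zero_of_le hl hle]
  obtain ⟨m, rfl⟩ := Nat.exists_eq_succ_of_ne_zero (Nat.ne_zero_of_lt hlt)
  rcases eq_or_ne l m with rfl | hne
  · rw [count_succ_self, K_succ_self]
  obtain ⟨v, rfl⟩ := Nat.exists_eq_succ_of_ne_zero hl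
  have hcongr : ∀ k ≤ m, count k = K k := fun k hk => ih k (Nat.lt_succ_of_le hk)
  rw [count_succ_succ, K_succ_succ (by lia), expandTwo_congr hcongr, selfConv_congr hcongr]

/-! ### Classes as sets of trees -/

/-- The set of trees belonging to a class. -/
def toSet (A : FlipClass) : Set T := {s | mk s = A}

theorem toSet_injective : Function.Injective toSet := by
  intro A B h
  obtain ⟨a, rfl⟩ := mk_surjective A
  exact (h ▸ rfl : a ∈ toSet B)

theorem toSet_mk (t : T) : toSet (mk t) = {s | Flip s t} :=
  Set.ext fun _ => mk_eq_mk

theorem setOf_flip_eq_image_toSet (n l : ℕ) :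
    {C : Set T | ∃ t : T, t.nodes = n ∧ _root_.ell t = l ∧ C = {s : T | Flip s t}} =
      toSet '' (withStats n l : Set FlipClass) := by
  ext C
  constructor
  · rintro ⟨t, hnodes, hell, rfl⟩
    exact ⟨mk t, mem_withStats.mpr ⟨hnodes, hell⟩, toSet_mk t⟩
  · rintro ⟨A, hA, rfl⟩
    obtain ⟨t, rfl⟩ := mk_surjective A
    obtain ⟨hnodes, hell⟩ := mem_withStats.mp hA
    exact ⟨t, hnodes, hell, toSet_mk t⟩

end FlipClass

/-- `K n ℓ` equals the number of flip-equivalence classes of planar binary trees with exactly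
`n` nodes whose class cardinality is `2^ℓ` (equivalently, whose members have exactly `ℓ`
internal positions with non-flip-equivalent children subtrees); in particular `K n ℓ` is a
natural number. -/
theorem K_counts_classes (n ℓ : ℕ) :
    {C : Set T | ∃ t : T, t.nodes = n ∧ ell t = ℓ ∧ C = {s : T | Flip s t}}.Finite ∧
    ({C : Set T | ∃ t : T, t.nodes = n ∧ ell t = ℓ ∧ C = {s : T | Flip s t}}.ncard : ℚ)
      = K n ℓ := by
  rw [FlipClass.setOf_flip_eq_image_toSet]
  refine ⟨(Finset.finite_toSet _).image _, ?_⟩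
  rw [Set.ncard_image_of_injective _ FlipClass.toSet_injective, Set.ncard_coe_finset]
  exact congrFun (FlipClass.count_eq_K n) ℓ
end

section
/- In the bivariate formal power series ring ℚ⟦x,y⟧, the series M(x,y) = Σ_{n,k} B₂(n,k)·x^n·y^k and the parity-split series of B₂ satisfy (1 − y)·M(x,y) = 2·(Q(x,y) − y·R(x,y)) − (1 − y)·(P₀(x,y)² + y·P₁(x,y)² + x·Q(x,y)² + x·y·R(x,y)²). -/
/-- The sequence `B` with `B 0 = B 1 = 1` and, for `n ≥ 1`,
`B (2n) = (1/2) · ∑_{k=0}^{2n-1} B (2n-1-k) · B k` and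
`B (2n+1) = (1/2) · (∑_{k=0}^{2n} B (2n-k) · B k + B n)`. -/
def B : ℕ → ℚ
  | 0 => 1
  | 1 => 1
  | n + 2 =>
    (1 / 2) * ((∑ k ∈ (Finset.range (n + 2)).attach, B (n + 1 - k.1) * B k.1)
      + if (n + 2) % 2 = 0 then 0 else B ((n + 1) / 2))
termination_by n => n
decreasing_by
  · omega
  · have := Finset.mem_range.mp k.2; omega
  · omega

/-- The array `B2 n k` of 2-colored non-isomorphic binary tree counts: base cases
`B2 0 0 = B2 1 0 = B2 1 1 = 1`, `B2 0 k = 0` for `k > 0`, `B2 1 k = 0` for `k > 1`,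
`B2 n 0 = B n` for `n > 1`, `B2 n k = 0` for `k > n`; and for `k > 0` the recurrences
`B2 (2n) k = (1/2) · ∑_{r=0}^{1} ∑_{ℓ=0}^{2n-1} ∑_{m=0}^{k-r} B2 ℓ m · B2 (2n-1-ℓ) (k-r-m)`,
`B2 (2n+1) (2k) = (1/2) · (∑_{r=0}^{1} ∑_{ℓ=0}^{2n} ∑_{m=0}^{2k-r} B2 ℓ m · B2 (2n-ℓ) (2k-r-m) + B2 n k)`
and similarly
`B2 (2n+1) (2k+1) = (1/2) · (∑_{r=0}^{1} ∑_{ℓ=0}^{2n} ∑_{m=0}^{2k+r} B2 ℓ m · B2 (2n-ℓ) (2k+r-m) + B2 n k)`. -/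
def B2 : ℕ → ℕ → ℚ
  | 0, k => if k = 0 then 1 else 0
  | 1, k => if k ≤ 1 then 1 else 0
  | n + 2, k =>
    if k = 0 then B (n + 2)
    else if n + 2 < k then 0
    else
      (1 / 2) * ((∑ r ∈ Finset.range 2, ∑ l ∈ (Finset.range (n + 2)).attach,
          ∑ m ∈ Finset.range (k - r + 1), B2 l.1 m * B2 (n + 1 - l.1) (k - r - m))
        + if (n + 2) % 2 = 0 then 0 else B2 ((n + 1) / 2) (k / 2))
termination_by n k => n
decreasing_by
  · have := Finset.mem_range.mp l.2; omega
  · omega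
  · omega

/-- The bivariate generating function `M(x,y) = ∑_{n,k} B2 n k · xⁿ y^k`. -/
noncomputable def M : MvPowerSeries (Fin 2) ℚ :=
  fun d => B2 (d 0) (d 1)

/-- `P₀(x,y) = ∑_{n≥0} ∑_k B2 (2n) (2k) · xⁿ y^k`. -/
noncomputable def P0 : MvPowerSeries (Fin 2) ℚ :=
  fun d => B2 (2 * d 0) (2 * d 1)

/-- `P₁(x,y) = ∑_{n≥1} ∑_k B2 (2n) (2k+1) · xⁿ y^k`. -/
noncomputable def P1 : MvPowerSeries (Fin 2) ℚ :=
  fun d => if 1 ≤ d 0 then B2 (2 * d 0) (2 * d 1 + 1) else 0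

/-- `Q(x,y) = ∑_{n≥0} ∑_k B2 (2n+1) (2k) · xⁿ y^k`. -/
noncomputable def Q : MvPowerSeries (Fin 2) ℚ :=
  fun d => B2 (2 * d 0 + 1) (2 * d 1)

/-- `R(x,y) = ∑_{n≥0} ∑_k B2 (2n+1) (2k+1) · xⁿ y^k`. -/
noncomputable def R : MvPowerSeries (Fin 2) ℚ :=
  fun d => B2 (2 * d 0 + 1) (2 * d 1 + 1)

/-!
Let `E` and `F` be the series formed by the coefficients of `M ^ 2` at the exponents `(2n, 2k)` and
`(2n, 2k + 1)`. At odd first index the recurrences for `B2` say that `2 * Q = E + y * F + M` and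
`2 * R = E + F + M`, so `F` cancels from `2 * (Q - y * R)` and leaves `(1 - y) * (E + M)`.
Squaring `M = P₀(x², y²) + y P₁(x², y²) + x Q(x², y²) + x y R(x², y²)`, only the squares of the four
summands contribute to `E`, which is therefore `P₀² + y P₁² + x Q² + x y R²`.
-/

open Finset MvPowerSeries

section Parity

variable {σ A : Type*}

/-- The exponent of the squarefree monomial `∏ i ∈ s, X i`, which encodes the parity class of the
exponents that are odd exactly on `s`. -/
noncomputable def parityExponent (s : Finset σ) : σ →₀ ℕ := ∑ i ∈ s, Finsupp.single i 1

theorem parityExponent_apply [DecidableEq σ] (s : Finset σ) (i : σ) :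
    parityExponent s i = if i ∈ s then 1 else 0 := by
  simp [parityExponent, Finsupp.finsetSum_apply, Finsupp.single_apply]

theorem parityExponent_insert [DecidableEq σ] {s : Finset σ} {i : σ} (hi : i ∉ s) :
    parityExponent (insert i s) = Finsupp.single i 1 + parityExponent s :=
  sum_insert hi

/-- The parity part of a power series: keep the terms whose exponent is odd exactly on `s`, divide
them by `∏ i ∈ s, X i`, and replace every `X i ^ 2` by `X i`. -/
noncomputable def parityPart [Semiring A] (s : Finset σ) :
    MvPowerSeries σ A →ₗ[A] MvPowerSeries σ A :=
  LinearMap.pi fun d => coeff (2 • d + parityExponent s)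

@[simp]
theorem coeff_parityPart [Semiring A] (s : Finset σ) (F : MvPowerSeries σ A) (d : σ →₀ ℕ) :
    coeff d (parityPart s F) = coeff (2 • d + parityExponent s) F :=
  rfl

theorem parityPart_insert_X_mul [DecidableEq σ] [Semiring A] {s : Finset σ} {i : σ}
    (hi : i ∉ s) (F : MvPowerSeries σ A) : parityPart (insert i s) (X i * F) = parityPart s F := by
  ext d
  rw [coeff_parityPart, parityExponent_insert hi, add_left_comm, X, coeff_add_monomial_mul, one_mul,
    coeff_parityPart]

theorem parityPart_X_mul [DecidableEq σ] [Semiring A] {s : Finset σ} {i : σ}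
    (hi : i ∉ s) (F : MvPowerSeries σ A) :
    parityPart s (X i * F) = X i * parityPart (insert i s) F := by
  ext d
  have le_iff : Finsupp.single i 1 ≤ 2 • d + parityExponent s ↔ Finsupp.single i 1 ≤ d := by
    simp only [Finsupp.single_le_iff, Finsupp.add_apply, Finsupp.smul_apply,
      parityExponent_apply, if_neg hi]
    grind
  rw [coeff_parityPart, X, coeff_monomial_mul, coeff_monomial_mul]
  simp only [le_iff, one_mul, coeff_parityPart, parityExponent_insert hi]
  split_ifs with h
  · obtain ⟨e, rfl⟩ := exists_add_of_le h
    rw [add_tsub_cancel_left, smul_add, two_nsmul (Finsupp.single i 1), add_assoc, add_assoc,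
      add_tsub_cancel_left, add_left_comm]
  · rfl

theorem monomial_parityExponent [CommSemiring A] (s : Finset σ) :
    monomial (parityExponent s) (1 : A) = ∏ i ∈ s, X i := by
  simp only [parityExponent, X, prod_monomial, prod_const_one]

theorem coeff_monomial_mul_expand_of_not_modEq [CommRing A] {p : ℕ} (hp : p ≠ 0) {m d : σ →₀ ℕ}
    {i : σ} (h : ¬ m i ≡ d i [MOD p]) (a : A) (F : MvPowerSeries σ A) :
    coeff d (monomial m a * expand p hp F) = 0 := by
  rw [coeff_monomial_mul]
  split_ifs with hle
  · have not_dvd : ¬ p ∣ (d - m) i := by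
      rwa [Finsupp.tsub_apply, ← Nat.modEq_iff_dvd' (hle i)]
    rw [coeff_expand_of_not_dvd p hp F not_dvd, mul_zero]
  · rfl

theorem sum_prod_X_mul_expand_parityPart [Fintype σ] [CommRing A] (F : MvPowerSeries σ A) :
    ∑ s : Finset σ, (∏ i ∈ s, X i) * expand 2 two_ne_zero (parityPart s F) = F := by
  classical
  ext d
  let odds : Finset σ := {i | Odd (d i)}
  have mem_odds (i : σ) : i ∈ odds ↔ Odd (d i) := by simp [odds]
  simp only [map_sum, ← monomial_parityExponent]
  rw [sum_eq_single_of_mem odds (mem_univ odds)]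
  · obtain ⟨e, he⟩ : ∃ e, d = parityExponent odds + 2 • e := by
      refine ⟨d.mapRange (· / 2) (Nat.zero_div 2), Finsupp.ext fun i => ?_⟩
      simp only [Finsupp.add_apply, Finsupp.smul_apply, Finsupp.mapRange_apply,
        parityExponent_apply, mem_odds]
      grind
    have coeff_eq : coeff (parityExponent odds + 2 • e)
        (monomial (parityExponent odds) 1 * expand 2 two_ne_zero (parityPart odds F)) =
        coeff (parityExponent odds + 2 • e) F := by
      rw [coeff_add_monomial_mul, one_mul, coeff_expand_smul, coeff_parityPart, add_comm]
    rwa [← he] at coeff_eq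
  · intro s _ hs
    obtain ⟨i, hi⟩ := not_forall.mp (mt Finset.ext hs)
    rw [mem_odds] at hi
    refine coeff_monomial_mul_expand_of_not_modEq two_ne_zero (i := i) ?_ 1 _
    rw [parityExponent_apply, Nat.ModEq]
    grind

theorem parityPart_empty_prod_X_sq_mul_expand [CommRing A] (s : Finset σ) (F : MvPowerSeries σ A) :
    parityPart ∅ ((∏ i ∈ s, X i) ^ 2 * expand 2 two_ne_zero F) = (∏ i ∈ s, X i) * F := by
  have sq_eq : (∏ i ∈ s, X i) ^ 2 = expand 2 two_ne_zero (∏ i ∈ s, X i : MvPowerSeries σ A) := by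
    simp only [map_prod, expand_X, prod_pow]
  rw [sq_eq, ← map_mul]
  ext d
  rw [coeff_parityPart, parityExponent, sum_empty, add_zero, coeff_expand_smul]

theorem parityPart_empty_prod_X_mul_expand_of_ne [CommRing A] {s t : Finset σ} (hst : s ≠ t)
    (F : MvPowerSeries σ A) :
    parityPart ∅ ((∏ i ∈ s, X i) * (∏ i ∈ t, X i) * expand 2 two_ne_zero F) = 0 := by
  classical
  obtain ⟨i, hi⟩ := not_forall.mp (mt Finset.ext hst)
  ext d
  rw [← monomial_parityExponent, ← monomial_parityExponent, monomial_mul_monomial,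
    coeff_parityPart, coeff_zero]
  refine coeff_monomial_mul_expand_of_not_modEq two_ne_zero (i := i) ?_ (1 * 1) _
  simp only [Finsupp.add_apply, Finsupp.smul_apply, parityExponent_apply, Nat.ModEq]
  grind

theorem parityPart_empty_mul [Fintype σ] [CommRing A] (F G : MvPowerSeries σ A) :
    parityPart ∅ (F * G) =
      ∑ s : Finset σ, (∏ i ∈ s, X i) * (parityPart s F * parityPart s G) := by
  have mul_mul_mul_expand (x y F₁ G₁ : MvPowerSeries σ A) :
      x * expand 2 two_ne_zero F₁ * (y * expand 2 two_ne_zero G₁) =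
        x * y * expand 2 two_ne_zero (F₁ * G₁) := by
    rw [map_mul, mul_mul_mul_comm]
  conv_lhs =>
    rw [← sum_prod_X_mul_expand_parityPart F, ← sum_prod_X_mul_expand_parityPart G, sum_mul_sum]
  simp only [map_sum, mul_mul_mul_expand]
  refine sum_congr rfl fun s _ => ?_
  rw [sum_eq_single_of_mem s (mem_univ s) fun t _ hts =>
    parityPart_empty_prod_X_mul_expand_of_ne hts.symm _, ← sq,
    parityPart_empty_prod_X_sq_mul_expand]

end Parity

theorem coeff_mul_fin_two {A : Type*} [Semiring A] (F G : MvPowerSeries (Fin 2) A)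
    (d : Fin 2 →₀ ℕ) :
    coeff d (F * G) = ∑ p ∈ antidiagonal (d 0), ∑ q ∈ antidiagonal (d 1),
      coeff ((finTwoArrowEquiv' ℕ).symm (p.1, q.1)) F *
        coeff ((finTwoArrowEquiv' ℕ).symm (p.2, q.2)) G := by
  let e := finTwoArrowEquiv' ℕ
  rw [coeff_mul, ← sum_product']
  refine sum_equiv ((e.prodCongr e).trans (Equiv.prodProdProdComm ℕ ℕ ℕ ℕ))
    (fun p => ?_) fun p _ => ?_
  · simp [e, Finsupp.ext_iff, Fin.forall_fin_two]
  · change _ = coeff (e.symm (e p.1)) F * coeff (e.symm (e p.2)) G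
    rw [e.symm_apply_apply, e.symm_apply_apply]

theorem parityPart_empty_sq_fin_two {A : Type*} [CommRing A] (F : MvPowerSeries (Fin 2) A) :
    parityPart ∅ (F ^ 2) = parityPart ∅ F ^ 2 + X 1 * parityPart {1} F ^ 2 +
      X 0 * parityPart {0} F ^ 2 + X 0 * X 1 * parityPart {0, 1} F ^ 2 := by
  have univ_eq : (univ : Finset (Finset (Fin 2))) = {∅, {1}, {0}, {0, 1}} := by decide
  rw [sq, parityPart_empty_mul, univ_eq, sum_insert (by decide), sum_insert (by decide),
    sum_insert (by decide), sum_singleton, prod_empty, prod_singleton, prod_singleton,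
    prod_pair zero_ne_one]
  ring

/-- The two-dimensional self-convolution of `B2`, that is, the array of coefficients of `M ^ 2`. -/
def convB2 (n k : ℕ) : ℚ :=
  ∑ p ∈ antidiagonal n, ∑ q ∈ antidiagonal k, B2 p.1 q.1 * B2 p.2 q.2

theorem convB2_eq_sum_range (n k : ℕ) :
    convB2 n k =
      ∑ l ∈ range (n + 1), ∑ m ∈ range (k + 1), B2 l m * B2 (n - l) (k - m) := by
  simp only [convB2, Nat.sum_antidiagonal_eq_sum_range_succ_mk]

theorem B2_zero_right (n : ℕ) : B2 n 0 = B n := by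
  rcases n with _ | _ | n <;> simp [B2, B]

theorem B2_eq_zero_of_lt {n k : ℕ} (h : n < k) : B2 n k = 0 := by
  rcases n with _ | _ | n <;> grind [B2]

theorem convB2_eq_zero_of_lt {n k : ℕ} (h : n < k) : convB2 n k = 0 := by
  refine sum_eq_zero fun p hp => sum_eq_zero fun q hq => ?_
  rw [HasAntidiagonal.mem_antidiagonal] at hp hq
  obtain h₁ | h₂ : p.1 < q.1 ∨ p.2 < q.2 := by omega
  · rw [B2_eq_zero_of_lt h₁, zero_mul]
  · rw [B2_eq_zero_of_lt h₂, mul_zero]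

theorem B_add_two (n : ℕ) :
    B (n + 2) = 1 / 2 * (∑ k ∈ range (n + 2), B k * B (n + 1 - k) +
      if (n + 2) % 2 = 0 then 0 else B ((n + 1) / 2)) := by
  rw [B, sum_attach (range (n + 2)) fun k => B (n + 1 - k) * B k]
  simp only [mul_comm (B (n + 1 - _))]

theorem two_mul_B_odd (n : ℕ) :
    2 * B (2 * n + 1) = ∑ k ∈ range (2 * n + 1), B k * B (2 * n - k) + B n := by
  obtain _ | n := n
  · norm_num [B]
  · have half : (2 * n + 1 + 1) / 2 = n + 1 := by omega
    rw [show 2 * (n + 1) + 1 = 2 * n + 1 + 2 by ring, B_add_two, if_neg (by omega), half]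
    ring_nf

theorem two_mul_B2_odd_zero (n : ℕ) : 2 * B2 (2 * n + 1) 0 = convB2 (2 * n) 0 + B2 n 0 := by
  simpa [convB2_eq_sum_range, B2_zero_right] using two_mul_B_odd n

theorem B2_add_two_succ {n k : ℕ} (h : k ≤ n + 1) :
    B2 (n + 2) (k + 1) = 1 / 2 * (convB2 (n + 1) (k + 1) + convB2 (n + 1) k +
      if (n + 2) % 2 = 0 then 0 else B2 ((n + 1) / 2) ((k + 1) / 2)) := by
  have sum_eq (j : ℕ) : ∑ l ∈ (range (n + 2)).attach, ∑ m ∈ range (j + 1),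
      B2 l.1 m * B2 (n + 1 - l.1) (j - m) = convB2 (n + 1) j := by
    rw [sum_attach (range (n + 2)) fun l => ∑ m ∈ range (j + 1), B2 l m * B2 (n + 1 - l) (j - m),
      convB2_eq_sum_range]
  rw [B2, if_neg k.succ_ne_zero, if_neg (by omega), sum_range_succ, sum_range_one, sum_eq, sum_eq,
    Nat.sub_zero, Nat.add_sub_cancel]

theorem two_mul_B2_odd_succ (n k : ℕ) :
    2 * B2 (2 * n + 1) (k + 1) =
      convB2 (2 * n) (k + 1) + convB2 (2 * n) k + B2 n ((k + 1) / 2) := by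
  obtain hk | hk := lt_or_ge (2 * n) k
  · rw [B2_eq_zero_of_lt (by omega), convB2_eq_zero_of_lt (by omega), convB2_eq_zero_of_lt hk,
      B2_eq_zero_of_lt (by omega)]
    norm_num
  obtain _ | n := n
  · obtain rfl : k = 0 := by omega
    norm_num [convB2_eq_sum_range, B2, sum_range_succ]
  · have half : (2 * n + 1 + 1) / 2 = n + 1 := by omega
    rw [show 2 * (n + 1) + 1 = 2 * n + 1 + 2 by ring, B2_add_two_succ (by omega),
      if_neg (by omega), half]
    ring_nf

theorem coeff_M (d : Fin 2 →₀ ℕ) : coeff d M = B2 (d 0) (d 1) := rfl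

theorem coeff_M_sq (d : Fin 2 →₀ ℕ) : coeff d (M ^ 2) = convB2 (d 0) (d 1) := by
  rw [sq, coeff_mul_fin_two]
  rfl

theorem two_mul_coeff_M_add_single {d : Fin 2 →₀ ℕ} (hd : Even (d 0)) :
    2 * coeff (d + Finsupp.single 0 1) M =
      coeff d ((1 + X 1) * M ^ 2) + B2 (d 0 / 2) (d 1 / 2) := by
  obtain ⟨n, hn⟩ := even_iff_exists_two_mul.mp hd
  have coeff_shift : coeff (d + Finsupp.single 0 1) M = B2 (2 * n + 1) (d 1) := by
    simp [coeff_M, hn]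
  rw [coeff_shift, hn, Nat.mul_div_cancel_left n two_pos, add_mul, one_mul, map_add, X,
    coeff_monomial_mul, coeff_M_sq, coeff_M_sq, hn]
  rcases hk : d 1 with _ | k
  · simp [hk, two_mul_B2_odd_zero]
  · simp [hk, hn, two_mul_B2_odd_succ]

theorem two_mul_parityPart_insert_zero_M {s : Finset (Fin 2)} (hs : 0 ∉ s) :
    2 * parityPart (insert 0 s) M = parityPart s ((1 + X 1) * M ^ 2) + M := by
  ext d
  have x_exponent : (2 • d + parityExponent s) 0 = 2 * d 0 := by
    simp [parityExponent_apply, hs]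
  have half_y_exponent : (2 • d + parityExponent s) 1 / 2 = d 1 := by
    simp only [Finsupp.add_apply, Finsupp.smul_apply, parityExponent_apply]
    grind
  have coeff_insert : coeff d (parityPart (insert 0 s) M) =
      coeff (2 • d + parityExponent s + Finsupp.single 0 1) M := by
    rw [coeff_parityPart, parityExponent_insert hs, add_left_comm, add_comm (Finsupp.single 0 1)]
  rw [two_mul, map_add, ← two_mul, coeff_insert,
    two_mul_coeff_M_add_single (x_exponent ▸ even_two_mul (d 0)), x_exponent,
    Nat.mul_div_cancel_left _ two_pos, half_y_exponent, map_add, coeff_parityPart, coeff_M]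

theorem parityPart_empty_M : parityPart ∅ M = P0 := by
  ext d
  rw [coeff_parityPart, coeff_M]
  simp [parityExponent_apply, coeff_apply, P0]

theorem parityPart_one_M : parityPart {1} M = P1 := by
  ext d
  rw [coeff_parityPart, coeff_M]
  by_cases h : 1 ≤ d 0
  · simp [parityExponent_apply, coeff_apply, P1, h]
  · simp [parityExponent_apply, coeff_apply, P1, B2, Nat.lt_one_iff.mp (not_le.mp h)]

theorem parityPart_zero_M : parityPart {0} M = Q := by
  ext d
  rw [coeff_parityPart, coeff_M]
  simp [parityExponent_apply, coeff_apply, Q]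

theorem parityPart_zero_one_M : parityPart {0, 1} M = R := by
  ext d
  rw [coeff_parityPart, coeff_M]
  simp [parityExponent_apply, coeff_apply, R]

theorem two_mul_Q : 2 * Q = parityPart ∅ (M ^ 2) + X 1 * parityPart {1} (M ^ 2) + M := by
  rw [← parityPart_zero_M, ← insert_empty_eq, two_mul_parityPart_insert_zero_M (notMem_empty 0),
    add_mul, one_mul, map_add, parityPart_X_mul (notMem_empty 1), insert_empty_eq]

theorem two_mul_R : 2 * R = parityPart {1} (M ^ 2) + parityPart ∅ (M ^ 2) + M := by
  rw [← parityPart_zero_one_M, two_mul_parityPart_insert_zero_M (by decide), add_mul, one_mul,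
    map_add, ← insert_empty_eq 1, parityPart_insert_X_mul (notMem_empty 1)]

/-- In `ℚ⟦x,y⟧`, `(1 − y)·M(x,y) = 2·(Q(x,y) − y·R(x,y))
− (1 − y)·(P₀(x,y)² + y·P₁(x,y)² + x·Q(x,y)² + x·y·R(x,y)²)`. -/
theorem one_sub_y_mul_M_eq :
    (1 - MvPowerSeries.X 1) * M =
      2 * (Q - MvPowerSeries.X 1 * R)
      - (1 - MvPowerSeries.X 1) * (P0 ^ 2 + MvPowerSeries.X 1 * P1 ^ 2
          + MvPowerSeries.X 0 * Q ^ 2 + MvPowerSeries.X 0 * MvPowerSeries.X 1 * R ^ 2) := by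
  have even_part : P0 ^ 2 + X 1 * P1 ^ 2 + X 0 * Q ^ 2 + X 0 * X 1 * R ^ 2 =
      parityPart ∅ (M ^ 2) := by
    rw [parityPart_empty_sq_fin_two, parityPart_empty_M, parityPart_one_M, parityPart_zero_M,
      parityPart_zero_one_M]
  rw [even_part]
  linear_combination X 1 * two_mul_R - two_mul_Q
end
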